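/- Let ρ₀ satisfy the stated first-order equation with limits a and b at ∓∞. Then ∫_ℝ ρ₀'(z)² dz = (√2/15)(b − a)(b⁴ + a⁴ + b³a + a³b − 4a²b²). -/

import Mathlib

open Filter

/-!
Along a solution of an autonomous equation `u' = f(u)` we have `(u')² = f(u) u'`, which is the
derivative of `F ∘ u` for any antiderivative `F` of `f`. So the integral of `(u')²` over the line
depends only on the limits of `u`: it is the integral of `f` from `a` to `b`. Being nonnegative,
`(u')²` is integrable as soon as `F ∘ u` has finite limits. For `f(s) = c (s² - a²)(b² - s²)`
it remains to integrate a polynomial.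
-/

open MeasureTheory
open scoped Topology

section NonnegDerivative

variable {g g' : ℝ → ℝ} {l m : ℝ}

theorem integrableOn_Iic_deriv_of_nonneg {x : ℝ} (hg : ∀ z ≤ x, HasDerivAt g (g' z) z)
    (hg' : ∀ z < x, 0 ≤ g' z) (hbot : Tendsto g atBot (𝓝 l)) :
    IntegrableOn g' (Set.Iic x) := by
  have hreflect : IntegrableOn (fun z ↦ g' (-z)) (Set.Ioi (-x)) := by
    refine integrableOn_Ioi_deriv_of_nonneg' (g := fun z ↦ -g (-z)) (l := -l)
      (fun z hz ↦ ?_) (fun z hz ↦ hg' _ (neg_lt.1 hz))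
      (hbot.comp tendsto_neg_atTop_atBot).neg
    exact ((hg (-z) (neg_le.1 hz)).comp z (hasDerivAt_neg z)).neg.congr_deriv (by ring)
  simpa [integrableOn_Iic_iff_integrableOn_Iio] using hreflect.comp_neg

theorem integrable_deriv_of_nonneg (hg : ∀ z, HasDerivAt g (g' z) z) (hg' : ∀ z, 0 ≤ g' z)
    (hbot : Tendsto g atBot (𝓝 l)) (htop : Tendsto g atTop (𝓝 m)) : Integrable g' := by
  rw [← integrableOn_univ, ← Set.Iic_union_Ioi (a := (0 : ℝ))]
  exact (integrableOn_Iic_deriv_of_nonneg (fun z _ ↦ hg z) (fun z _ ↦ hg' z) hbot).union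
    (integrableOn_Ioi_deriv_of_nonneg' (fun z _ ↦ hg z) (fun z _ ↦ hg' z) htop)

end NonnegDerivative

theorem integral_deriv_sq_of_autonomous {f u : ℝ → ℝ} {a b : ℝ} (hf : Continuous f)
    (hu : ∀ z, HasDerivAt u (f (u z)) z)
    (hbot : Tendsto u atBot (𝓝 a)) (htop : Tendsto u atTop (𝓝 b)) :
    ∫ z, (deriv u z) ^ 2 = ∫ s in a..b, f s := by
  let F : ℝ → ℝ := fun x ↦ ∫ s in a..x, f s
  have hF (x : ℝ) : HasDerivAt F (f x) x := hf.integral_hasStrictDerivAt a x |>.hasDerivAt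
  have hFu (z : ℝ) : HasDerivAt (F ∘ u) ((deriv u z) ^ 2) z := by
    simpa only [(hu z).deriv, sq] using (hF (u z)).comp z (hu z)
  have hFbot : Tendsto (F ∘ u) atBot (𝓝 (F a)) := (hF a).continuousAt.tendsto.comp hbot
  have hFtop : Tendsto (F ∘ u) atTop (𝓝 (F b)) := (hF b).continuousAt.tendsto.comp htop
  have hint : Integrable fun z ↦ (deriv u z) ^ 2 :=
    integrable_deriv_of_nonneg hFu (fun z ↦ sq_nonneg _) hFbot hFtop
  calc ∫ z, (deriv u z) ^ 2 = F b - F a := integral_of_hasDerivAt_of_tendsto hFu hint hFbot hFtop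
    _ = ∫ s in a..b, f s := by simp only [F, intervalIntegral.integral_same, sub_zero]

theorem integral_sq_sub_mul_sub_sq (a b : ℝ) :
    ∫ s in a..b, (s ^ 2 - a ^ 2) * (b ^ 2 - s ^ 2) =
      2 / 15 * (b - a) * (b ^ 4 + a ^ 4 + b ^ 3 * a + a ^ 3 * b - 4 * a ^ 2 * b ^ 2) := by
  let P : ℝ → ℝ := fun s ↦ (a ^ 2 + b ^ 2) * (s ^ 3 / 3) - s ^ 5 / 5 - a ^ 2 * b ^ 2 * s
  have hP (s : ℝ) : HasDerivAt P ((s ^ 2 - a ^ 2) * (b ^ 2 - s ^ 2)) s := by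
    refine (((((hasDerivAt_pow 3 s).div_const 3).const_mul (a ^ 2 + b ^ 2)).sub
      ((hasDerivAt_pow 5 s).div_const 5)).sub
      ((hasDerivAt_id s).const_mul (a ^ 2 * b ^ 2))).congr_deriv ?_
    push_cast
    ring
  rw [intervalIntegral.integral_eq_sub_of_hasDerivAt (fun s _ ↦ hP s)
    (Continuous.intervalIntegrable (by fun_prop) a b)]
  simp only [P]
  ring

theorem statement5_general {a b c : ℝ} {u : ℝ → ℝ}
    (hu : ∀ z, HasDerivAt u (c * (u z ^ 2 - a ^ 2) * (b ^ 2 - u z ^ 2)) z)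
    (hbot : Tendsto u atBot (𝓝 a)) (htop : Tendsto u atTop (𝓝 b)) :
    ∫ z, (deriv u z) ^ 2 =
      2 * c / 15 * (b - a) *
        (b ^ 4 + a ^ 4 + b ^ 3 * a + a ^ 3 * b - 4 * a ^ 2 * b ^ 2) := by
  calc ∫ z, (deriv u z) ^ 2
      = ∫ s in a..b, c * (s ^ 2 - a ^ 2) * (b ^ 2 - s ^ 2) :=
        integral_deriv_sq_of_autonomous (f := fun s ↦ c * (s ^ 2 - a ^ 2) * (b ^ 2 - s ^ 2))
          (by fun_prop) hu hbot htop
    _ = c * ∫ s in a..b, (s ^ 2 - a ^ 2) * (b ^ 2 - s ^ 2) := by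
        simp only [mul_assoc, intervalIntegral.integral_const_mul]
    _ = _ := by rw [integral_sq_sub_mul_sub_sq]; ring

/-- If `ρ₀' = (√2/2)(ρ₀² − a²)(b² − ρ₀²)` with `a < ρ₀ < b` and limits
`a` at `−∞`, `b` at `+∞`, then
`∫_ℝ ρ₀'(z)² dz = (√2/15)(b − a)(b⁴ + a⁴ + b³a + a³b − 4a²b²)`. -/
theorem statement5 (a b : ℝ) (ha : 0 < a) (hab : a < b) (ρ₀ : ℝ → ℝ)
    (hreg : ContDiff ℝ 1 ρ₀)
    (hderiv : ∀ z, deriv ρ₀ z =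
      Real.sqrt 2 / 2 * ((ρ₀ z) ^ 2 - a ^ 2) * (b ^ 2 - (ρ₀ z) ^ 2))
    (hbnd : ∀ z, a < ρ₀ z ∧ ρ₀ z < b)
    (hbot : Tendsto ρ₀ atBot (nhds a))
    (htop : Tendsto ρ₀ atTop (nhds b)) :
    (∫ z : ℝ, (deriv ρ₀ z) ^ 2) =
      Real.sqrt 2 / 15 * (b - a) * (b ^ 4 + a ^ 4 + b ^ 3 * a + a ^ 3 * b - 4 * a ^ 2 * b ^ 2) := by
  rw [statement5_general (fun z ↦ hderiv z ▸ (hreg.differentiable one_ne_zero z).hasDerivAt)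
    hbot htop, mul_div_cancel₀ _ two_ne_zero]
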